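/- Let φ(x,t) = t^p + a(x) t^q with 1 < p < q < ∞ and a a nonnegative function in C^{0,α}(ℝⁿ) for some α ∈ (0,1]. For a compact set E ⊆ ℝⁿ the following are equivalent: (a) there exist c_fat > 0 and 0 < r_o ≤ 1 such that for every z ∈ E and 0 < r < r_o, cap^inf_{φ̃_{z,r}}({x ∈ B̄(0,1/2) : z + r x ∈ E}; B(0,1)) ≥ c_fat, where φ̃_{z,r}(x,t) = φ(z + r x, t); (b) there exist c̃_fat > 0 and 0 < r̃_o ≤ 1 such that for every z ∈ E and 0 < r < r̃_o, cap_φ^inf(E ∩ B̄(z, r/2); B(z,r)) ≥ c̃_fat · cap_φ^inf(B̄(z, r/2); B(z,r)). -/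

import Mathlib

open MeasureTheory Metric Set

noncomputable section

/-- Euclidean space `ℝⁿ`. -/
abbrev En (n : ℕ) : Type := EuclideanSpace ℝ (Fin n)

/-- Norm of the (a.e. defined, by Rademacher's theorem) gradient of `u` at `x`. -/
def gnorm {n : ℕ} (u : En n → ℝ) (x : En n) : ℝ := ‖fderiv ℝ u x‖

/-- Admissible test functions for the level-`t` capacity of `E` in `O`:
Lipschitz on the closure of `O`, `u ≥ t` on `E`, `u = 0` on `∂O`. -/
def Adm {n : ℕ} (E O : Set (En n)) (t : ℝ) : Set (En n → ℝ) :=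
  {u | (∃ K, LipschitzOnWith K u (closure O)) ∧ (∀ x ∈ E, t ≤ u x) ∧
    ∀ x ∈ frontier O, u x = 0}

/-- Level-`t` variational capacity with integrand `ψ` and normalization `ψm`. -/
def capLevel {n : ℕ} (ψ : En n → ℝ → ℝ) (ψm : ℝ → ℝ)
    (E O : Set (En n)) (t : ℝ) : ℝ :=
  sInf ((fun u => ∫ x in O, ψ x (gnorm u x) / ψm t) '' Adm E O t)

/-- Infimal capacity with integrand `ψ` and normalization `ψm`. -/
def capInfGen {n : ℕ} (ψ : En n → ℝ → ℝ) (ψm : ℝ → ℝ) (E O : Set (En n)) : ℝ :=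
  ⨅ t : Ioi (0 : ℝ), capLevel ψ ψm E O (t : ℝ)

/-- The double-phase integrand `φ(x,t) = t^p + a(x) t^q`. -/
def phi {n : ℕ} (a : En n → ℝ) (p q : ℝ) (x : En n) (t : ℝ) : ℝ :=
  t ^ p + a x * t ^ q

/-- `a_O^- = inf_{x ∈ O} a(x)`. -/
def aInfOn {n : ℕ} (a : En n → ℝ) (O : Set (En n)) : ℝ := sInf (a '' O)

/-- `a_O^+ = sup_{x ∈ O} a(x)`. -/
def aSupOn {n : ℕ} (a : En n → ℝ) (O : Set (En n)) : ℝ := sSup (a '' O)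

/-- `φ_O^-(t) = t^p + a_O^- t^q`. -/
def phiMinus {n : ℕ} (a : En n → ℝ) (p q : ℝ) (O : Set (En n)) (t : ℝ) : ℝ :=
  t ^ p + aInfOn a O * t ^ q

/-- Level-`t` variational capacity for the double-phase integrand. -/
def capPhiLevel {n : ℕ} (a : En n → ℝ) (p q t : ℝ) (E O : Set (En n)) : ℝ :=
  capLevel (phi a p q) (phiMinus a p q O) E O t

/-- Infimal `φ`-capacity. -/
def capPhiInf {n : ℕ} (a : En n → ℝ) (p q : ℝ) (E O : Set (En n)) : ℝ :=
  ⨅ t : Ioi (0 : ℝ), capPhiLevel a p q (t : ℝ) E O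

/-- Variational `p`-capacity. -/
def capP {n : ℕ} (p : ℝ) (E O : Set (En n)) : ℝ :=
  sInf ((fun u => ∫ x in O, gnorm u x ^ p) '' Adm E O 1)

/-- The rescaled set `{x ∈ B̄(0,1/2) : z + r x ∈ E}`. -/
def shiftedSet {n : ℕ} (E : Set (En n)) (z : En n) (r : ℝ) : Set (En n) :=
  {x ∈ closedBall (0 : En n) (1 / 2) | z + r • x ∈ E}

/-- Local uniform infimal `φ`-fatness with parameters `cfat` and `ro`. -/
def LocUnifPhiFat {n : ℕ} (a : En n → ℝ) (p q : ℝ) (E : Set (En n))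
    (cfat ro : ℝ) : Prop :=
  ∀ z ∈ E, ∀ r : ℝ, 0 < r → r < ro →
    cfat ≤ capPhiInf (fun x => a (z + r • x)) p q (shiftedSet E z r) (ball (0 : En n) 1)

/-- Local uniform `p`-fatness with parameters `cfat` and `ro`. -/
def LocUnifPFat {n : ℕ} (p : ℝ) (E : Set (En n)) (cfat ro : ℝ) : Prop :=
  ∀ z ∈ E, ∀ r : ℝ, 0 < r → r < ro →
    cfat ≤ capP p (shiftedSet E z r) (ball (0 : En n) 1)

/-- `Lip_0(Ω)`: Lipschitz functions with compact support contained in `Ω`,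
extended by zero to `ℝⁿ`. -/
def Lip0 {n : ℕ} (Ω : Set (En n)) : Set (En n → ℝ) :=
  {u | (∃ K, LipschitzWith K u) ∧ HasCompactSupport u ∧ tsupport u ⊆ Ω}

/-- Restricted centered maximal operator `M_R f(x) = sup_{0<r<R} ⨍_{B(x,r)} |f|`. -/
def maxOp {n : ℕ} (R : ℝ) (f : En n → ℝ) (x : En n) : ℝ :=
  ⨆ r : Ioo (0 : ℝ) R, ⨍ y in ball x (r : ℝ), |f y|

section UnitBall

variable {n : ℕ}

lemma gnorm_nonneg (u : En n → ℝ) (x : En n) : 0 ≤ gnorm u x := norm_nonneg _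

lemma measurable_gnorm (u : En n → ℝ) : Measurable (gnorm u) :=
  (measurable_fderiv ℝ u).norm

/-- The gradient of a function that is Lipschitz on a closed ball is bounded in the open ball. -/
lemma gnorm_le_of_lipschitzOnWith {u : En n → ℝ} {K : NNReal} {O : Set (En n)} (hO : IsOpen O)
    (hu : LipschitzOnWith K u (closure O)) {x : En n} (hx : x ∈ O) : gnorm u x ≤ K :=
  norm_fderiv_le_of_lipschitzOn ℝ (hO.mem_nhds hx) (hu.mono subset_closure)

/-- Weighted powers of the gradient of a Lipschitz function are integrable on a ball. -/
lemma integrableOn_mul_gnorm_rpow {u : En n → ℝ} {K : NNReal} {z : En n} {r : ℝ}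
    (hu : LipschitzOnWith K u (closure (ball z r))) {b : En n → ℝ} (hb : Continuous b)
    {s : ℝ} (hs : 0 ≤ s) :
    IntegrableOn (fun x => b x * gnorm u x ^ s) (ball z r) := by
  obtain ⟨M, hM⟩ := (isCompact_closedBall z r).exists_bound_of_continuousOn hb.continuousOn
  refine Measure.integrableOn_of_bounded (M := M * (K : ℝ) ^ s) measure_ball_lt_top.ne
    (hb.measurable.mul ((measurable_gnorm u).pow_const s)).aestronglyMeasurable ?_
  refine (ae_restrict_iff' measurableSet_ball).2 (.of_forall fun x hx => ?_)
  rw [norm_mul, Real.norm_of_nonneg (Real.rpow_nonneg (gnorm_nonneg u x) s)]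
  have h1 := hM x (ball_subset_closedBall hx)
  have h2 := Real.rpow_le_rpow (gnorm_nonneg u x)
    (gnorm_le_of_lipschitzOnWith isOpen_ball hu hx) hs
  exact mul_le_mul h1 h2 (Real.rpow_nonneg (gnorm_nonneg u x) s) ((norm_nonneg _).trans h1)

lemma integrableOn_gnorm_rpow {u : En n → ℝ} {K : NNReal} {z : En n} {r : ℝ}
    (hu : LipschitzOnWith K u (closure (ball z r))) {s : ℝ} (hs : 0 ≤ s) :
    IntegrableOn (fun x => gnorm u x ^ s) (ball z r) := by
  simpa using integrableOn_mul_gnorm_rpow hu (continuous_const (y := (1 : ℝ))) hs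

/-- An elementary lower bound for a power by a smaller power. -/
lemma rpow_sub_mul_le {s t ε g : ℝ} (hst : s ≤ t) (hs : 0 < s) (hε : 0 < ε) (hg : 0 ≤ g) :
    ε ^ (t - s) * (g ^ s - ε ^ s) ≤ g ^ t := by
  rcases le_total ε g with h | h
  · have h0 : 0 < g := hε.trans_le h
    have h1 : ε ^ (t - s) ≤ g ^ (t - s) := Real.rpow_le_rpow hε.le h (by linarith)
    have h2 : g ^ t = g ^ (t - s) * g ^ s := by rw [← Real.rpow_add h0]; ring_nf
    rw [h2]
    have := Real.rpow_nonneg hε.le s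
    have h3 : g ^ s - ε ^ s ≤ g ^ s := by linarith
    exact (mul_le_mul_of_nonneg_left h3 (Real.rpow_nonneg hε.le _)).trans
      (mul_le_mul_of_nonneg_right h1 (Real.rpow_nonneg hg s))
  · have h1 : g ^ s ≤ ε ^ s := Real.rpow_le_rpow hg h hs.le
    exact (mul_nonpos_of_nonneg_of_nonpos (Real.rpow_nonneg hε.le _) (by linarith)).trans
      (Real.rpow_nonneg hg t)

/-- The cone `x ↦ 2 (1 - |x|)` is admissible for subsets of the half ball. -/
lemma adm_unitBall_nonempty {S : Set (En n)} (hS : S ⊆ closedBall 0 (1 / 2)) :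
    (Adm S (ball (0 : En n) 1) 1).Nonempty := by
  refine ⟨fun x => 2 * (1 - ‖x‖), ⟨2, ?_⟩, fun x hx => ?_, fun x hx => ?_⟩
  · refine LipschitzWith.lipschitzOnWith (LipschitzWith.of_dist_le_mul fun x y => ?_)
    have := abs_norm_sub_norm_le y x
    rw [Real.dist_eq, dist_comm, dist_eq_norm, NNReal.coe_ofNat,
      show 2 * (1 - ‖x‖) - 2 * (1 - ‖y‖) = 2 * (‖y‖ - ‖x‖) by ring, abs_mul, abs_two]
    linarith
  · have := mem_closedBall_zero_iff.1 (hS hx)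
    show 1 ≤ 2 * (1 - ‖x‖)
    linarith
  · rw [frontier_ball _ one_ne_zero, mem_sphere_zero_iff_norm] at hx
    simp [hx]

/-- Bounding the values of an admissible function by the distance to the boundary. -/
lemma abs_le_of_lipschitzOnWith_unitBall (hn : 0 < n) {v : En n → ℝ} {K : NNReal}
    (hv : LipschitzOnWith K v (closure (ball 0 1)))
    (h0 : ∀ x ∈ frontier (ball (0 : En n) 1), v x = 0) {x : En n} (hx : ‖x‖ ≤ 1) :
    |v x| ≤ K * (1 - ‖x‖) := by
  have : Nonempty (Fin n) := ⟨⟨0, hn⟩⟩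
  rw [closure_ball _ one_ne_zero] at hv
  rw [frontier_ball _ one_ne_zero] at h0
  obtain ⟨w, hw, hxw⟩ : ∃ w : En n, ‖w‖ = 1 ∧ dist x w = 1 - ‖x‖ := by
    by_cases hx0 : x = 0
    · obtain ⟨w, hw⟩ := exists_norm_eq (En n) zero_le_one
      exact ⟨w, hw, by simp [hx0, hw]⟩
    · have hxn : 0 < ‖x‖ := norm_pos_iff.2 hx0
      refine ⟨‖x‖⁻¹ • x, norm_smul_inv_norm hx0, ?_⟩
      rw [dist_eq_norm, show x - ‖x‖⁻¹ • x = (1 - ‖x‖⁻¹) • x by rw [sub_smul, one_smul], norm_smul,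
        Real.norm_of_nonpos (by linarith [(one_le_inv₀ hxn).2 hx])]
      field_simp
      ring
  have := hv.dist_le_mul x (by simpa using hx) w (by simp [hw])
  rwa [h0 w (by simpa using hw), Real.dist_eq, sub_zero, hxw] at this

/-- The positive part of an admissible function, extended by zero, is Lipschitz. -/
lemma lipschitzWith_indicator_posPart (hn : 0 < n) {v : En n → ℝ} {K : NNReal}
    (hv : LipschitzOnWith K v (closure (ball 0 1)))
    (h0 : ∀ x ∈ frontier (ball (0 : En n) 1), v x = 0) :
    LipschitzWith K ((ball (0 : En n) 1).indicator fun x => max (v x) 0) := by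
  have key : ∀ x y : En n, x ∈ ball (0 : En n) 1 → y ∉ ball (0 : En n) 1 →
      |max (v x) 0| ≤ K * dist x y := by
    intro x y hx hy
    rw [mem_ball_zero_iff] at hx hy
    have h1 := abs_le_of_lipschitzOnWith_unitBall hn hv h0 hx.le
    have h2 : 1 - ‖x‖ ≤ dist x y := by
      have := norm_sub_norm_le y x
      rw [dist_comm, dist_eq_norm]
      linarith
    have h3 : |max (v x) 0| ≤ |v x| := by
      rw [abs_of_nonneg (le_max_right _ _)]
      exact max_le (le_abs_self _) (abs_nonneg _)
    exact h3.trans (h1.trans (mul_le_mul_of_nonneg_left h2 K.coe_nonneg))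
  refine LipschitzWith.of_dist_le_mul fun x y => ?_
  by_cases hx : x ∈ ball (0 : En n) 1 <;> by_cases hy : y ∈ ball (0 : En n) 1
  · rw [indicator_of_mem hx, indicator_of_mem hy]
    refine le_trans ?_ (hv.dist_le_mul x (subset_closure hx) y (subset_closure hy))
    rw [Real.dist_eq, Real.dist_eq]
    exact abs_max_sub_max_le_abs _ _ _
  · rw [indicator_of_mem hx, indicator_of_notMem hy, Real.dist_eq, sub_zero]
    exact key x y hx hy
  · rw [indicator_of_notMem hx, indicator_of_mem hy, dist_comm, Real.dist_eq, sub_zero, dist_comm x]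
    exact key y x hy hx
  · rw [indicator_of_notMem hx, indicator_of_notMem hy, dist_self]
    positivity

/-- A Poincaré-type lower bound for the Dirichlet energy of test functions of the half ball. -/
lemma volume_closedBall_le_integral_gnorm (hn : 0 < n) {v : En n → ℝ}
    (hv : v ∈ Adm (closedBall (0 : En n) (1 / 2)) (ball 0 1) 1) :
    volume.real (closedBall (0 : En n) (1 / 2)) ≤ ∫ x in ball (0 : En n) 1, gnorm v x := by
  obtain ⟨⟨K, hK⟩, h1, h0⟩ := hv
  set F : En n → ℝ := (ball (0 : En n) 1).indicator fun x => max (v x) 0 with hF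
  have hFl : LipschitzWith K F := lipschitzWith_indicator_posPart hn hK h0
  have hF0 : ∀ x, 0 ≤ F x := fun x => indicator_nonneg (fun _ _ => le_max_right _ _) x
  have hFs : HasCompactSupport F :=
    HasCompactSupport.intro (isCompact_closedBall (0 : En n) 1) fun x hx =>
      indicator_of_notMem (fun h => hx (ball_subset_closedBall h)) _
  have hFi : Integrable F := hFl.continuous.integrable_of_hasCompactSupport hFs
  have hgi : IntegrableOn (gnorm v) (ball (0 : En n) 1) := by
    simpa using integrableOn_gnorm_rpow hK (zero_le_one (α := ℝ))
  let i : Fin n := ⟨0, hn⟩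
  let e : En n := EuclideanSpace.single i 1
  let G : En n →L[ℝ] ℝ := EuclideanSpace.proj i
  have hG : ∀ x, lineDeriv ℝ G x e = 1 := fun x => by
    rw [G.differentiableAt.lineDeriv_eq_fderiv, G.fderiv]
    simp [G, e]
  have hparts := LipschitzWith.integral_lineDeriv_mul_eq (μ := volume) G.lipschitz hFl hFs e
  simp only [hG, one_mul] at hparts
  have hbound : ∀ᵐ x : En n, lineDeriv ℝ F x (-e) * G x ≤
      (ball (0 : En n) 1).indicator (gnorm v) x := by
    filter_upwards [hFl.ae_differentiableAt (μ := volume)] with x hx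
    by_cases hFx : F x = 0
    · have hmin : IsLocalMin F x := Filter.Eventually.of_forall fun y => by rw [hFx]; exact hF0 y
      rw [hx.lineDeriv_eq_fderiv, hmin.fderiv_eq_zero]
      simpa using indicator_nonneg (fun y _ => gnorm_nonneg v y) x
    · have hxB : x ∈ ball (0 : En n) 1 := by
        by_contra h
        exact hFx (indicator_of_notMem h _)
      have hFpos : 0 < F x := lt_of_le_of_ne (hF0 x) (Ne.symm hFx)
      have hev : F =ᶠ[nhds x] v := by
        filter_upwards [isOpen_ball.mem_nhds hxB,
          hFl.continuous.continuousAt.eventually (lt_mem_nhds hFpos)] with y hy hy0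
        rw [hF, indicator_of_mem hy] at hy0 ⊢
        rcases le_total (v y) 0 with h | h
        · rw [max_eq_right h] at hy0
          exact absurd hy0 (lt_irrefl _)
        · exact max_eq_left h
      rw [hx.lineDeriv_eq_fderiv, hev.fderiv_eq, indicator_of_mem hxB]
      have hGx : |G x| ≤ 1 :=
        (PiLp.norm_apply_le x i).trans (mem_ball_zero_iff.1 hxB).le
      have hfe : |fderiv ℝ v x (-e)| ≤ gnorm v x := by
        have := (fderiv ℝ v x).le_opNorm (-e)
        simpa [e, gnorm] using this
      calc fderiv ℝ v x (-e) * G x ≤ |fderiv ℝ v x (-e)| * |G x| := by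
            rw [← abs_mul]; exact le_abs_self _
        _ ≤ gnorm v x * 1 := mul_le_mul hfe hGx (abs_nonneg _) (gnorm_nonneg v x)
        _ = gnorm v x := mul_one _
  have hupper : ∫ x, F x ≤ ∫ x in ball (0 : En n) 1, gnorm v x := by
    rw [hparts, ← integral_indicator measurableSet_ball]
    by_cases hint : Integrable fun x => lineDeriv ℝ F x (-e) * G x
    · exact integral_mono_ae hint (hgi.integrable_indicator measurableSet_ball) hbound
    · rw [integral_undef hint]
      exact integral_nonneg fun x => indicator_nonneg (fun y _ => gnorm_nonneg v y) x
  refine le_trans ?_ hupper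
  calc volume.real (closedBall (0 : En n) (1 / 2))
      = ∫ x in closedBall (0 : En n) (1 / 2), (1 : ℝ) := by simp
    _ ≤ ∫ x in closedBall (0 : En n) (1 / 2), F x := by
        refine setIntegral_mono_on (integrableOn_const measure_closedBall_lt_top.ne)
          hFi.integrableOn measurableSet_closedBall fun x hx => ?_
        rw [hF, indicator_of_mem (closedBall_subset_ball (by norm_num) hx)]
        exact (h1 x hx).trans (le_max_left _ _)
    _ ≤ ∫ x, F x := setIntegral_le_integral hFi (.of_forall hF0)

/-- The half ball has positive variational `p`-capacity in the unit ball. -/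
lemma capP_closedBall_pos (hn : 0 < n) {p : ℝ} (hp : 1 < p) :
    0 < capP p (closedBall (0 : En n) (1 / 2)) (ball 0 1) := by
  set b := volume.real (closedBall (0 : En n) (1 / 2))
  set m := volume.real (ball (0 : En n) 1)
  have hb : 0 < b := ENNReal.toReal_pos (measure_closedBall_pos _ _ (by norm_num)).ne'
    measure_closedBall_lt_top.ne
  have hm : 0 < m := ENNReal.toReal_pos (measure_ball_pos _ _ one_pos).ne' measure_ball_lt_top.ne
  set ε := b / (2 * m) with hε
  have hε0 : 0 < ε := by positivity
  have hεm : ε * m = b / 2 := by rw [hε]; field_simp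
  refine lt_of_lt_of_le (b := ε ^ (p - 1) * (b / 2)) (by positivity) ?_
  refine le_csInf ((adm_unitBall_nonempty subset_rfl).image _) ?_
  rintro _ ⟨v, hv, rfl⟩
  have hP := volume_closedBall_le_integral_gnorm hn hv
  obtain ⟨⟨K, hK⟩, -, -⟩ := hv
  have hgi : IntegrableOn (gnorm v) (ball (0 : En n) 1) := by
    simpa using integrableOn_gnorm_rpow hK (zero_le_one (α := ℝ))
  have hci : IntegrableOn (fun _ : En n => ε) (ball (0 : En n) 1) :=
    integrableOn_const measure_ball_lt_top.ne
  calc ε ^ (p - 1) * (b / 2) ≤ ε ^ (p - 1) * ((∫ x in ball (0 : En n) 1, gnorm v x) - ε * m) := by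
        gcongr; rw [hεm]; linarith
    _ = ∫ x in ball (0 : En n) 1, ε ^ (p - 1) * (gnorm v x - ε) := by
        rw [integral_const_mul, integral_sub hgi hci, setIntegral_const, smul_eq_mul, mul_comm ε m]
    _ ≤ ∫ x in ball (0 : En n) 1, gnorm v x ^ p := by
        refine integral_mono ((hgi.sub hci).const_mul _)
          (integrableOn_gnorm_rpow hK (by linarith)) fun x => ?_
        simpa using rpow_sub_mul_le hp.le one_pos hε0 (gnorm_nonneg v x)

end UnitBall

section Rescaling

variable {n : ℕ} {a : En n → ℝ} {p q r t : ℝ} {E : Set (En n)} {z : En n}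

lemma shiftedSet_subset (E : Set (En n)) (z : En n) (r : ℝ) :
    shiftedSet E z r ⊆ closedBall 0 (1 / 2) := fun _ hx => hx.1

lemma dist_add_smul (hr : 0 < r) (z x y : En n) :
    dist (z + r • x) (z + r • y) = r * dist x y := by
  rw [dist_add_left, dist_smul₀, Real.norm_of_nonneg hr.le]

lemma adm_comp_affine (hr : 0 < r) (ht : 0 < t) {u : En n → ℝ}
    (hu : u ∈ Adm (E ∩ closedBall z (r / 2)) (ball z r) t) :
    (fun y => t⁻¹ * u (z + r • y)) ∈ Adm (shiftedSet E z r) (ball 0 1) 1 := by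
  obtain ⟨⟨K, hK⟩, h1, h0⟩ := hu
  rw [closure_ball _ hr.ne'] at hK
  rw [frontier_ball _ hr.ne'] at h0
  have hz : ∀ y : En n, dist (z + r • y) z = r * ‖y‖ := fun y => by
    rw [dist_eq_norm, add_sub_cancel_left, norm_smul, Real.norm_of_nonneg hr.le]
  refine ⟨⟨NNReal.mk (t⁻¹ * K * r) (by positivity), ?_⟩, fun y hy => ?_, fun y hy => ?_⟩
  · rw [closure_ball _ one_ne_zero]
    refine LipschitzOnWith.of_dist_le_mul fun x hx y hy => ?_
    rw [mem_closedBall_zero_iff] at hx hy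
    have hmem : ∀ w : En n, ‖w‖ ≤ 1 → z + r • w ∈ closedBall z r := fun w hw => by
      rw [mem_closedBall, hz]; nlinarith
    have := hK.dist_le_mul _ (hmem x hx) _ (hmem y hy)
    rw [dist_add_smul hr, Real.dist_eq] at this
    rw [Real.dist_eq, ← mul_sub, abs_mul, abs_of_pos (inv_pos.2 ht), NNReal.coe_mk]
    calc t⁻¹ * |u (z + r • x) - u (z + r • y)| ≤ t⁻¹ * (K * (r * dist x y)) := by gcongr
      _ = t⁻¹ * K * r * dist x y := by ring
  · have hmem : z + r • y ∈ E ∩ closedBall z (r / 2) := by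
      refine ⟨hy.2, ?_⟩
      have := mem_closedBall_zero_iff.1 hy.1
      rw [mem_closedBall, hz]
      nlinarith
    rw [← inv_mul_cancel₀ ht.ne']
    exact mul_le_mul_of_nonneg_left (h1 _ hmem) (inv_pos.2 ht).le
  · rw [frontier_ball _ one_ne_zero, mem_sphere_zero_iff_norm] at hy
    beta_reduce
    rw [h0 _ (by rw [mem_sphere, hz, hy, mul_one]), mul_zero]

lemma adm_of_comp_affine (hr : 0 < r) (ht : 0 < t) {v : En n → ℝ}
    (hv : v ∈ Adm (shiftedSet E z r) (ball 0 1) 1) :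
    (fun x => t * v (r⁻¹ • (x - z))) ∈ Adm (E ∩ closedBall z (r / 2)) (ball z r) t := by
  obtain ⟨⟨K, hK⟩, h1, h0⟩ := hv
  rw [closure_ball _ one_ne_zero] at hK
  rw [frontier_ball _ one_ne_zero] at h0
  have hnorm : ∀ x : En n, ‖r⁻¹ • (x - z)‖ = dist x z / r := fun x => by
    rw [norm_smul, Real.norm_of_nonneg (inv_pos.2 hr).le, dist_eq_norm, inv_mul_eq_div]
  refine ⟨⟨NNReal.mk (t * K * r⁻¹) (by positivity), ?_⟩, fun x hx => ?_, fun x hx => ?_⟩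
  · rw [closure_ball _ hr.ne']
    refine LipschitzOnWith.of_dist_le_mul fun x hx y hy => ?_
    have hmem : ∀ w ∈ closedBall z r, r⁻¹ • (w - z) ∈ closedBall (0 : En n) 1 := fun w hw => by
      rw [mem_closedBall_zero_iff, hnorm, div_le_one hr]; exact hw
    have := hK.dist_le_mul _ (hmem x hx) _ (hmem y hy)
    rw [dist_smul₀, Real.norm_of_nonneg (inv_pos.2 hr).le, dist_sub_right, Real.dist_eq] at this
    rw [Real.dist_eq, ← mul_sub, abs_mul, abs_of_pos ht, NNReal.coe_mk]
    calc t * |v (r⁻¹ • (x - z)) - v (r⁻¹ • (y - z))| ≤ t * (K * (r⁻¹ * dist x y)) := by gcongr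
      _ = t * K * r⁻¹ * dist x y := by ring
  · have hmem : r⁻¹ • (x - z) ∈ shiftedSet E z r := by
      refine ⟨?_, ?_⟩
      · have := mem_closedBall.1 hx.2
        rw [mem_closedBall_zero_iff, hnorm, div_le_iff₀ hr]
        linarith
      · rw [smul_inv_smul₀ hr.ne', add_sub_cancel]
        exact hx.1
    exact le_mul_of_one_le_right ht.le (h1 _ hmem)
  · rw [frontier_ball _ hr.ne'] at hx
    beta_reduce
    rw [h0 _ (by rw [mem_sphere_zero_iff_norm, hnorm, mem_sphere.1 hx, div_self hr.ne']), mul_zero]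

lemma gnorm_comp_affine (hr : 0 < r) (ht : 0 < t) (u : En n → ℝ) (y : En n) :
    gnorm u (z + r • y) = t / r * gnorm (fun y => t⁻¹ * u (z + r • y)) y := by
  have h : fderiv ℝ (fun y => t⁻¹ * u (z + r • y)) y = (t⁻¹ * r) • fderiv ℝ u (z + r • y) := by
    have h1 := congrFun (fderiv_const_smul_field (𝕜 := ℝ) (f := fun y => u (z + r • y)) t⁻¹) y
    have h2 := fderiv_comp_smul (𝕜 := ℝ) (f := fun x => u (z + x)) (x := y) r
    rw [fderiv_comp_add_left] at h2
    rw [mul_smul, ← h2]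
    exact h1
  rw [gnorm, gnorm, h, norm_smul, Real.norm_of_nonneg (by positivity)]
  field_simp

lemma setIntegral_ball_eq (hr : 0 < r) (z : En n) (f : En n → ℝ) :
    ∫ x in ball z r, f x = r ^ n * ∫ y in ball (0 : En n) 1, f (z + r • y) := by
  have h1 : ∫ x in ball z r, f x = ∫ x in ball (0 : En n) r, f (z + x) := by
    rw [← integral_indicator measurableSet_ball, ← integral_indicator measurableSet_ball,
      ← integral_add_left_eq_self _ z]
    congr 1
    ext x
    by_cases hx : x ∈ ball (0 : En n) r
    · rw [indicator_of_mem hx, indicator_of_mem (by simpa using hx)]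
    · rw [indicator_of_notMem hx, indicator_of_notMem (by simpa using hx)]
  rw [h1, Measure.setIntegral_comp_smul_of_pos volume (fun x => f (z + x)) _ hr,
    smul_unitBall_of_pos hr, finrank_euclideanSpace_fin, smul_eq_mul,
    mul_inv_cancel_left₀ (by positivity)]

lemma energy_comp_affine (hr : 0 < r) (ht : 0 < t) (u : En n → ℝ) (D : ℝ) :
    ∫ x in ball z r, phi a p q x (gnorm u x) / D =
      r ^ n * ∫ y in ball (0 : En n) 1, phi a p q (z + r • y)
        (t / r * gnorm (fun y => t⁻¹ * u (z + r • y)) y) / D := by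
  rw [setIntegral_ball_eq hr]
  simp only [gnorm_comp_affine (z := z) hr ht u]

end Rescaling

section Comparison

variable {n : ℕ} {a : En n → ℝ} {p q r : ℝ}

lemma aInfOn_nonneg (ha : ∀ x, 0 ≤ a x) (O : Set (En n)) : 0 ≤ aInfOn a O :=
  Real.sInf_nonneg (by rintro _ ⟨x, -, rfl⟩; exact ha x)

lemma aInfOn_le (ha : ∀ x, 0 ≤ a x) {O : Set (En n)} {x : En n} (hx : x ∈ O) : aInfOn a O ≤ a x :=
  csInf_le ⟨0, by rintro _ ⟨y, -, rfl⟩; exact ha y⟩ (mem_image_of_mem a hx)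

lemma phi_nonneg (ha : ∀ x, 0 ≤ a x) {t : ℝ} (ht : 0 ≤ t) (x : En n) : 0 ≤ phi a p q x t :=
  add_nonneg (Real.rpow_nonneg ht p) (mul_nonneg (ha x) (Real.rpow_nonneg ht q))

lemma phiMinus_nonneg (ha : ∀ x, 0 ≤ a x) {t : ℝ} (ht : 0 ≤ t) (O : Set (En n)) :
    0 ≤ phiMinus a p q O t :=
  add_nonneg (Real.rpow_nonneg ht p) (mul_nonneg (aInfOn_nonneg ha O) (Real.rpow_nonneg ht q))

lemma bddBelow_energy (ha : ∀ x, 0 ≤ a x) {t : ℝ} (ht : 0 ≤ t) (E O : Set (En n)) :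
    BddBelow ((fun u => ∫ x in O, phi a p q x (gnorm u x) / phiMinus a p q O t) '' Adm E O t) := by
  refine ⟨0, ?_⟩
  rintro _ ⟨u, -, rfl⟩
  exact integral_nonneg fun x =>
    div_nonneg (phi_nonneg ha (gnorm_nonneg u x) x) (phiMinus_nonneg ha ht O)

lemma capPhiInf_le_energy (ha : ∀ x, 0 ≤ a x) {E O : Set (En n)} {t : ℝ} (ht : 0 < t)
    {u : En n → ℝ} (hu : u ∈ Adm E O t) :
    capPhiInf a p q E O ≤ ∫ x in O, phi a p q x (gnorm u x) / phiMinus a p q O t := by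
  have hb : BddBelow (range fun t : Ioi (0 : ℝ) => capPhiLevel a p q (t : ℝ) E O) := by
    refine ⟨0, ?_⟩
    rintro _ ⟨s, rfl⟩
    refine Real.sInf_nonneg ?_
    rintro _ ⟨u, -, rfl⟩
    exact integral_nonneg fun x =>
      div_nonneg (phi_nonneg ha (gnorm_nonneg u x) x) (phiMinus_nonneg ha (le_of_lt s.2) O)
  exact (ciInf_le hb ⟨t, ht⟩).trans (csInf_le (bddBelow_energy ha ht.le E O) (mem_image_of_mem _ hu))

/-- The infimal `φ`-capacity in a ball is at most the rescaled `p`-capacity. -/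
lemma capPhiInf_le_capP (hp : 1 < p) (hpq : p < q) (ha : ∀ x, 0 ≤ a x) (hac : Continuous a)
    (E : Set (En n)) (z : En n) (hr : 0 < r) :
    capPhiInf a p q (E ∩ closedBall z (r / 2)) (ball z r) ≤
      r ^ n / r ^ p * capP p (shiftedSet E z r) (ball 0 1) := by
  have hp0 : 0 < p := by linarith
  have hq0 : 0 < q := by linarith
  have hrp : 0 < r ^ n / r ^ p := by positivity
  rw [← div_le_iff₀' hrp]
  refine le_csInf ((adm_unitBall_nonempty (shiftedSet_subset E z r)).image _) ?_
  rintro _ ⟨v, hv, rfl⟩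
  rw [div_le_iff₀' hrp]
  obtain ⟨K, hK⟩ := hv.1
  have hcont : Continuous fun y : En n => a (z + r • y) := by fun_prop
  have hgp := integrableOn_gnorm_rpow hK hp0.le
  have hgq := integrableOn_mul_gnorm_rpow hK hcont hq0.le
  set P := ∫ x in ball (0 : En n) 1, gnorm v x ^ p
  set Q := ∫ x in ball (0 : En n) 1, a (z + r • x) * gnorm v x ^ q
  have hlevel : ∀ t : ℝ, 0 < t → capPhiInf a p q (E ∩ closedBall z (r / 2)) (ball z r) ≤
      r ^ n / r ^ p * P + t ^ (q - p) * (r ^ n / r ^ q * Q) := by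
    intro t ht
    refine (capPhiInf_le_energy ha ht (adm_of_comp_affine hr ht hv)).trans ?_
    rw [energy_comp_affine hr ht]
    have hv' : (fun y : En n => t⁻¹ * (t * v (r⁻¹ • (z + r • y - z)))) = v := by
      ext y
      rw [inv_mul_cancel_left₀ ht.ne', add_sub_cancel_left, inv_smul_smul₀ hr.ne']
    rw [hv']
    have hle : ∫ y in ball (0 : En n) 1,
        phi a p q (z + r • y) (t / r * gnorm v y) / phiMinus a p q (ball z r) t ≤
        ∫ y in ball (0 : En n) 1, ((r ^ p)⁻¹ * gnorm v y ^ p +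
          t ^ (q - p) / r ^ q * (a (z + r • y) * gnorm v y ^ q)) := by
      refine integral_mono_of_nonneg (.of_forall fun y => ?_)
        ((hgp.const_mul _).add (hgq.const_mul _)) (.of_forall fun y => ?_)
      · exact div_nonneg (phi_nonneg ha (mul_nonneg (by positivity) (gnorm_nonneg v y)) _)
          (phiMinus_nonneg ha ht.le _)
      · have hg := gnorm_nonneg v y
        have hay := ha (z + r • y)
        have htp : 0 < t ^ p := Real.rpow_pos_of_pos ht p
        have hden : t ^ p ≤ phiMinus a p q (ball z r) t :=
          le_add_of_nonneg_right (mul_nonneg (aInfOn_nonneg ha _) (Real.rpow_nonneg ht.le q))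
        calc phi a p q (z + r • y) (t / r * gnorm v y) / phiMinus a p q (ball z r) t
            ≤ phi a p q (z + r • y) (t / r * gnorm v y) / t ^ p :=
              div_le_div_of_nonneg_left (phi_nonneg ha (by positivity) _) htp hden
          _ = _ := by
              rw [phi, Real.mul_rpow (by positivity) hg, Real.mul_rpow (by positivity) hg,
                Real.div_rpow ht.le hr.le, Real.div_rpow ht.le hr.le, Real.rpow_sub ht]
              field_simp
    calc _ ≤ r ^ n * _ := mul_le_mul_of_nonneg_left hle (by positivity)
      _ = _ := by
        rw [integral_add (hgp.const_mul _) (hgq.const_mul _), integral_const_mul,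
          integral_const_mul]
        ring
  have htend : Filter.Tendsto (fun t : ℝ => r ^ n / r ^ p * P + t ^ (q - p) * (r ^ n / r ^ q * Q))
      (nhdsWithin 0 (Ioi 0)) (nhds (r ^ n / r ^ p * P)) := by
    have hc : Continuous fun t : ℝ => r ^ n / r ^ p * P + t ^ (q - p) * (r ^ n / r ^ q * Q) :=
      continuous_const.add ((Real.continuous_rpow_const (by linarith)).mul continuous_const)
    have := (hc.tendsto 0).mono_left (nhdsWithin_le_nhds (s := Ioi 0))
    simpa [Real.zero_rpow (sub_pos.2 hpq).ne'] using this
  exact ge_of_tendsto htend (Filter.eventually_of_mem self_mem_nhdsWithin hlevel)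

/-- The infimal `φ`-capacity in a small ball is bounded below in terms of the rescaled
`p`-capacity. -/
lemma le_capPhiInf (hp : 1 < p) (hpq : p < q) (ha : ∀ x, 0 ≤ a x) (hac : Continuous a)
    (E : Set (En n)) (z : En n) (hr : 0 < r) (hr1 : r ≤ 1) {ε : ℝ} (hε : 0 < ε) (hε1 : ε ≤ 1) :
    r ^ n / r ^ p * (ε ^ (q - p) * (capP p (shiftedSet E z r) (ball 0 1) -
      ε ^ p * volume.real (ball (0 : En n) 1))) ≤
      capPhiInf a p q (E ∩ closedBall z (r / 2)) (ball z r) := by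
  have hp0 : 0 < p := by linarith
  have hq0 : 0 < q := by linarith
  have : Nonempty (Ioi (0 : ℝ)) := ⟨⟨1, mem_Ioi.2 one_pos⟩⟩
  refine le_ciInf fun ⟨t, ht⟩ => ?_
  rw [mem_Ioi] at ht
  refine le_csInf (Nonempty.image _ ?_) ?_
  · obtain ⟨v, hv⟩ := adm_unitBall_nonempty (shiftedSet_subset E z r)
    exact ⟨_, adm_of_comp_affine hr ht hv⟩
  rintro _ ⟨u, hu, rfl⟩
  beta_reduce
  rw [energy_comp_affine hr ht]
  have hv := adm_comp_affine hr ht hu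
  set v : En n → ℝ := fun y => t⁻¹ * u (z + r • y)
  obtain ⟨K, hK⟩ := hv.1
  have hcont : Continuous fun y : En n => a (z + r • y) := by fun_prop
  have hgp := integrableOn_gnorm_rpow hK hp0.le
  have hgq := integrableOn_mul_gnorm_rpow hK hcont hq0.le
  have hci : IntegrableOn (fun _ : En n => ε ^ p) (ball (0 : En n) 1) :=
    integrableOn_const measure_ball_lt_top.ne
  have hcap : capP p (shiftedSet E z r) (ball 0 1) ≤ ∫ x in ball (0 : En n) 1, gnorm v x ^ p := by
    refine csInf_le ⟨0, ?_⟩ (mem_image_of_mem _ hv)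
    rintro _ ⟨w, -, rfl⟩
    exact integral_nonneg fun x => Real.rpow_nonneg (gnorm_nonneg w x) p
  set D := phiMinus a p q (ball z r) t with hD
  have htp : 0 < t ^ p := Real.rpow_pos_of_pos ht p
  have htq : 0 < t ^ q := Real.rpow_pos_of_pos ht q
  have hinf := aInfOn_nonneg ha (ball z r)
  have hDpos : 0 < D := add_pos_of_pos_of_nonneg htp (mul_nonneg hinf htq.le)
  have hrw : ∀ y, phi a p q (z + r • y) (t / r * gnorm v y) / D =
      t ^ p / r ^ p / D * gnorm v y ^ p + t ^ q / r ^ q / D * (a (z + r • y) * gnorm v y ^ q) := by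
    intro y
    rw [phi, Real.mul_rpow (by positivity) (gnorm_nonneg v y),
      Real.mul_rpow (by positivity) (gnorm_nonneg v y), Real.div_rpow ht.le hr.le,
      Real.div_rpow ht.le hr.le]
    ring
  rw [div_mul_eq_mul_div, mul_div_assoc]
  refine mul_le_mul_of_nonneg_left ?_ (by positivity)
  calc _ ≤ ε ^ (q - p) * ((∫ x in ball (0 : En n) 1, gnorm v x ^ p) -
        ε ^ p * volume.real (ball (0 : En n) 1)) / r ^ p := by gcongr
    _ = ∫ y in ball (0 : En n) 1, ε ^ (q - p) * (gnorm v y ^ p - ε ^ p) / r ^ p := by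
        rw [integral_div, integral_const_mul, integral_sub hgp hci, setIntegral_const, smul_eq_mul,
          mul_comm (ε ^ p)]
    _ ≤ _ := by
        refine setIntegral_mono_on (((hgp.sub hci).const_mul _).div_const _) ?_
          measurableSet_ball fun y hy => ?_
        · simp only [hrw]
          exact (hgp.const_mul _).add (hgq.const_mul _)
        have hg := gnorm_nonneg v y
        have hzy : z + r • y ∈ ball z r := by
          rw [mem_ball_zero_iff] at hy
          rw [mem_ball, dist_eq_norm, add_sub_cancel_left, norm_smul, Real.norm_of_nonneg hr.le]
          nlinarith
        set X := ε ^ (q - p) * (gnorm v y ^ p - ε ^ p)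
        have hXq : X ≤ gnorm v y ^ q := rpow_sub_mul_le hpq.le hp0 hε hg
        have hXp : X ≤ gnorm v y ^ p := by
          have h1 : ε ^ (q - p) ≤ 1 := Real.rpow_le_one hε.le hε1 (by linarith)
          have h2 := Real.rpow_nonneg hε.le (q - p)
          have h3 := Real.rpow_nonneg hε.le p
          have h4 := Real.rpow_nonneg hg p
          have h5 : X ≤ ε ^ (q - p) * gnorm v y ^ p := mul_le_mul_of_nonneg_left (by linarith) h2
          exact h5.trans (mul_le_of_le_one_left h4 h1)
        have hrq : r ^ q ≤ r ^ p := Real.rpow_le_rpow_of_exponent_ge hr hr1 hpq.le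
        have hrq0 : 0 < r ^ q := Real.rpow_pos_of_pos hr q
        have hrp0 : 0 < r ^ p := Real.rpow_pos_of_pos hr p
        rw [hrw]
        calc X / r ^ p = t ^ p / r ^ p / D * X + t ^ q / r ^ p / D * (aInfOn a (ball z r) * X) := by
              have hDe : D = t ^ p + aInfOn a (ball z r) * t ^ q := rfl
              field_simp
              rw [hDe]
              ring
          _ ≤ t ^ p / r ^ p / D * gnorm v y ^ p +
              t ^ q / r ^ p / D * (a (z + r • y) * gnorm v y ^ q) := by
              have : aInfOn a (ball z r) * X ≤ a (z + r • y) * gnorm v y ^ q :=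
                (mul_le_mul_of_nonneg_left hXq hinf).trans
                  (mul_le_mul_of_nonneg_right (aInfOn_le ha hzy) (Real.rpow_nonneg hg q))
              gcongr
          _ ≤ _ := by
              have := mul_nonneg (ha (z + r • y)) (Real.rpow_nonneg hg q)
              gcongr

/-- A positive lower bound for the rescaled `p`-capacity gives one for the infimal `φ`-capacity. -/
lemma exists_pos_le_capPhiInf (n : ℕ) (hp : 1 < p) (hpq : p < q) {c : ℝ} (hc : 0 < c) :
    ∃ m : ℝ, 0 < m ∧ ∀ (a : En n → ℝ), (∀ x, 0 ≤ a x) → Continuous a →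
      ∀ (E : Set (En n)) (z : En n) (r : ℝ), 0 < r → r ≤ 1 →
        c ≤ capP p (shiftedSet E z r) (ball 0 1) →
        r ^ n / r ^ p * m ≤ capPhiInf a p q (E ∩ closedBall z (r / 2)) (ball z r) := by
  have hp0 : 0 < p := by linarith
  set V := volume.real (ball (0 : En n) 1)
  have hV : 0 < V :=
    ENNReal.toReal_pos (measure_ball_pos _ _ one_pos).ne' measure_ball_lt_top.ne
  set δ := min 1 (c / (2 * V))
  have hδ : 0 < δ := lt_min one_pos (by positivity)
  set ε := δ ^ p⁻¹
  have hε : 0 < ε := Real.rpow_pos_of_pos hδ _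
  have hε1 : ε ≤ 1 := Real.rpow_le_one hδ.le (min_le_left _ _) (by positivity)
  have hεp : ε ^ p * V ≤ c / 2 := by
    rw [Real.rpow_inv_rpow hδ.le hp0.ne']
    calc δ * V ≤ c / (2 * V) * V := by gcongr; exact min_le_right _ _
      _ = c / 2 := by field_simp
  refine ⟨ε ^ (q - p) * (c / 2), by positivity, fun a ha hac E z r hr hr1 hcap => ?_⟩
  refine le_trans ?_ (le_capPhiInf hp hpq ha hac E z hr hr1 hε hε1)
  gcongr
  linarith

lemma shiftedSet_zero_one {S : Set (En n)} (hS : S ⊆ closedBall 0 (1 / 2)) :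
    shiftedSet S 0 1 = S := by
  ext x
  simp only [shiftedSet, mem_ofPred_eq, zero_add, one_smul]
  exact ⟨fun h => h.2, fun h => ⟨hS h, h⟩⟩

lemma shiftedSet_univ (z : En n) (r : ℝ) : shiftedSet univ z r = closedBall 0 (1 / 2) := by
  ext x
  simp [shiftedSet]

lemma continuous_of_holder {A α : ℝ} (hα : 0 < α)
    (haH : ∀ x y, |a x - a y| ≤ A * dist x y ^ α) : Continuous a := by
  refine continuous_iff_continuousAt.2 fun y => ?_
  rw [ContinuousAt, tendsto_iff_dist_tendsto_zero]
  refine squeeze_zero (fun _ => dist_nonneg) (fun x => haH x y) ?_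
  have hc : Continuous fun x => A * dist x y ^ α :=
    continuous_const.mul ((Real.continuous_rpow_const hα.le).comp (by fun_prop))
  have := hc.tendsto y
  simpa [Real.zero_rpow hα.ne'] using this

end Comparison

/-- **Equivalence of the two formulations of infimal `φ`-fatness** (Remark 2.4):
the rescaled condition (Definition 1.2) is equivalent to the standard
fatness condition comparing capacities of concentric balls. -/
theorem fatness_formulations_equiv
    (n : ℕ) (hn : 0 < n) (p q α A : ℝ) (a : En n → ℝ)
    (hp : 1 < p) (hpq : p < q) (hα : 0 < α) (hα1 : α ≤ 1)
    (ha : ∀ x, 0 ≤ a x) (hA : 0 ≤ A)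
    (haH : ∀ x y, |a x - a y| ≤ A * dist x y ^ α)
    (E : Set (En n)) (hE : IsCompact E) :
    (∃ cfat ro : ℝ, 0 < cfat ∧ 0 < ro ∧ ro ≤ 1 ∧ LocUnifPhiFat a p q E cfat ro) ↔
    (∃ cfat ro : ℝ, 0 < cfat ∧ 0 < ro ∧ ro ≤ 1 ∧
      ∀ z ∈ E, ∀ r : ℝ, 0 < r → r < ro →
        cfat * capPhiInf a p q (closedBall z (r / 2)) (ball z r) ≤
          capPhiInf a p q (E ∩ closedBall z (r / 2)) (ball z r)) := by
  have hac := continuous_of_holder hα haH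
  have hcomp : ∀ (z : En n) (r : ℝ), Continuous fun x => a (z + r • x) := fun z r => by fun_prop
  have hP0 := capP_closedBall_pos hn hp
  set P₀ := capP p (closedBall (0 : En n) (1 / 2)) (ball 0 1)
  have hunit : ∀ (z : En n) (r : ℝ), shiftedSet E z r ∩ closedBall 0 2⁻¹ = shiftedSet E z r :=
    fun z r => by
      rw [← one_div]; exact inter_eq_left.2 (shiftedSet_subset E z r)
  constructor
  · rintro ⟨c, ro, hc, hro, hro1, hfat⟩
    obtain ⟨m, hm, hlow⟩ := exists_pos_le_capPhiInf n hp hpq hc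
    refine ⟨m / P₀, ro, by positivity, hro, hro1, fun z hz r hr hrr => ?_⟩
    have hcP : c ≤ capP p (shiftedSet E z r) (ball 0 1) := by
      refine (hfat z hz r hr hrr).trans ?_
      have := capPhiInf_le_capP hp hpq (fun x => ha _) (hcomp z r) (shiftedSet E z r) 0 one_pos
      simpa [hunit, shiftedSet_zero_one (shiftedSet_subset E z r)] using this
    have hball := capPhiInf_le_capP hp hpq ha hac univ z hr
    rw [univ_inter, shiftedSet_univ] at hball
    calc m / P₀ * capPhiInf a p q (closedBall z (r / 2)) (ball z r)
        ≤ m / P₀ * (r ^ n / r ^ p * P₀) := by gcongr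
      _ = r ^ n / r ^ p * m := by field_simp
      _ ≤ _ := hlow a ha hac E z r hr (hrr.le.trans hro1) hcP
  · rintro ⟨c, ro, hc, hro, hro1, hfat⟩
    obtain ⟨m₀, hm₀, hball⟩ := exists_pos_le_capPhiInf n hp hpq hP0
    obtain ⟨m, hm, hlow⟩ := exists_pos_le_capPhiInf n hp hpq (mul_pos hc hm₀)
    refine ⟨m, ro, hm, hro, hro1, fun z hz r hr hrr => ?_⟩
    have hcP : c * m₀ ≤ capP p (shiftedSet E z r) (ball 0 1) := by
      have h1 := hball a ha hac univ z r hr (hrr.le.trans hro1) (by rw [shiftedSet_univ])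
      rw [univ_inter] at h1
      have h2 := hfat z hz r hr hrr
      have h3 := capPhiInf_le_capP hp hpq ha hac E z hr
      have hs : 0 < r ^ n / r ^ p := by positivity
      refine le_of_mul_le_mul_left ?_ hs
      calc r ^ n / r ^ p * (c * m₀) = c * (r ^ n / r ^ p * m₀) := by ring
        _ ≤ c * capPhiInf a p q (closedBall z (r / 2)) (ball z r) := by gcongr
        _ ≤ _ := h2.trans h3
    have := hlow (fun x => a (z + r • x)) (fun x => ha _) (hcomp z r) (shiftedSet E z r) 0 1
      one_pos le_rfl (by rwa [shiftedSet_zero_one (shiftedSet_subset E z r)])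
    simpa [hunit] using this
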